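/- Let 0 ≤ ε < 1, r ∈ [0, 1−ε), r_ε = 1 − ε, t_ε = φ(r_ε), and T = φ(r) − t_ε. Suppose f : (0,T) → ℝ satisfies f(τ) > 1 and f(τ)²·(φ(r/f(τ)) − φ(r_ε/f(τ))) = φ(r) − τ − t_ε for all τ ∈ (0,T). Then f is differentiable on (0,T) with f'(τ) = 1/( f(τ)·(ψ(r_ε/f(τ)) − ψ(r/f(τ))) ) > 0 for all τ ∈ (0,T); in particular f is strictly increasing, and f(τ) → 1 as τ → 0⁺. -/

import Mathlib

/-!
For `a = r` and `b = 1 - ε` consider the function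
`levelFn a b s = s² (φ(a/s) - φ(b/s))` on `[1, ∞)`.
Since `2 φ(u) - u φ'(u) = ψ(u)`, its derivative at `s > 1` is `s (ψ(a/s) - ψ(b/s))`, which is
negative because `ψ` is strictly increasing on `[0, 1)`. Hence `levelFn a b` is strictly decreasing
on `[1, ∞)`, with value `φ(a) - φ(b) = T` at `s = 1`. The hypothesis on `f` says
`levelFn a b (f τ) = T - τ`, that is, `f` is a right inverse of the strictly increasing function
`T - levelFn a b`, which vanishes at `s = 1`. So `f` is strictly increasing and continuous, tends
to `1` at `0⁺`, and the inverse function rule gives the derivative.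
-/

noncomputable section

/-- The profile function `φ(r) = arccos r + r √(1 - r²)`. -/
def phi (r : ℝ) : ℝ := Real.arccos r + r * Real.sqrt (1 - r ^ 2)

/-- `ψ(r) = 2 (r/√(1-r²) + arccos r)`. -/
def psi (r : ℝ) : ℝ := 2 * (r / Real.sqrt (1 - r ^ 2) + Real.arccos r)

lemma hasDerivAt_sqrt_one_sub_sq {x : ℝ} (h : 0 < 1 - x ^ 2) :
    HasDerivAt (fun y : ℝ => Real.sqrt (1 - y ^ 2)) (-x / Real.sqrt (1 - x ^ 2)) x := by
  have h1 : HasDerivAt (fun y : ℝ => 1 - y ^ 2) (-(2 * x)) x := by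
    simpa using (hasDerivAt_pow 2 x).const_sub 1
  have h2 := h1.sqrt h.ne'
  convert h2 using 1
  have : Real.sqrt (1 - x ^ 2) ≠ 0 := (Real.sqrt_pos.2 h).ne'
  field_simp

lemma hasDerivAt_phi {x : ℝ} (h0 : -1 < x) (h1 : x < 1) :
    HasDerivAt phi (-2 * x ^ 2 / Real.sqrt (1 - x ^ 2)) x := by
  have h : 0 < 1 - x ^ 2 := by nlinarith
  have hs : Real.sqrt (1 - x ^ 2) ≠ 0 := (Real.sqrt_pos.2 h).ne'
  have hq : Real.sqrt (1 - x ^ 2) ^ 2 = 1 - x ^ 2 := Real.sq_sqrt h.le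
  have := (Real.hasDerivAt_arccos h0.ne' h1.ne).add
    ((hasDerivAt_id x).mul (hasDerivAt_sqrt_one_sub_sq h))
  refine HasDerivAt.congr_deriv (f := phi) this ?_
  simp only [id]
  field_simp
  rw [hq]; ring

lemma hasDerivAt_psi {x : ℝ} (h0 : -1 < x) (h1 : x < 1) :
    HasDerivAt psi (2 * x ^ 2 / Real.sqrt (1 - x ^ 2) ^ 3) x := by
  have h : 0 < 1 - x ^ 2 := by nlinarith
  have hs : Real.sqrt (1 - x ^ 2) ≠ 0 := (Real.sqrt_pos.2 h).ne'
  have hq : Real.sqrt (1 - x ^ 2) ^ 2 = 1 - x ^ 2 := Real.sq_sqrt h.le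
  have := (((hasDerivAt_id x).div (hasDerivAt_sqrt_one_sub_sq h) hs).add
    (Real.hasDerivAt_arccos h0.ne' h1.ne)).const_mul 2
  refine HasDerivAt.congr_deriv (f := psi) this ?_
  simp only [id]
  field_simp
  rw [hq]; ring

lemma psi_strictMonoOn : StrictMonoOn psi (Set.Ico 0 1) := by
  apply strictMonoOn_of_deriv_pos (convex_Ico 0 1)
  · intro x hx
    exact (hasDerivAt_psi (by linarith [hx.1]) hx.2).continuousAt.continuousWithinAt
  · intro x hx
    rw [interior_Ico] at hx
    have h : 0 < 1 - x ^ 2 := by nlinarith [hx.1, hx.2]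
    have hs := Real.sqrt_pos.2 h
    have hx0 := hx.1
    rw [(hasDerivAt_psi (by linarith) hx.2).deriv]
    positivity

lemma continuous_phi : Continuous phi := by
  unfold phi
  have := Real.continuous_arccos
  fun_prop

/-- The function `s ↦ s² (φ(a/s) - φ(b/s))` whose value at `s = f τ` the implicit equation
prescribes. -/
def levelFn (a b s : ℝ) : ℝ := s ^ 2 * (phi (a / s) - phi (b / s))

/-- The identity `2 φ(u) - u φ'(u) = ψ(u)`, in the form of a derivative of `s² φ(a/s)`. -/
lemma hasDerivAt_sq_mul_phi {a s : ℝ} (ha0 : 0 ≤ a) (ha1 : a ≤ 1) (hs : 1 < s) :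
    HasDerivAt (fun s => s ^ 2 * phi (a / s)) (s * psi (a / s)) s := by
  have hs0 : s ≠ 0 := by positivity
  have hu0 : 0 ≤ a / s := by positivity
  have hu1 : a / s < 1 := by rw [div_lt_one (by linarith)]; linarith
  have hd : HasDerivAt (fun s : ℝ => a / s) (-a / s ^ 2) s := by
    exact ((hasDerivAt_const s a).div (hasDerivAt_id s) hs0).congr_deriv (by simp)
  have h := (hasDerivAt_pow 2 s).mul ((hasDerivAt_phi (by linarith) hu1).comp s hd)
  refine HasDerivAt.congr_deriv (f := fun s => s ^ 2 * phi (a / s)) h ?_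
  -- Eliminate `a` in favour of `u = a / s`.
  obtain ⟨u, rfl⟩ : ∃ u, a = u * s := ⟨a / s, by field_simp⟩
  rw [mul_div_cancel_right₀ _ hs0] at hu0 hu1
  have hp : 0 < 1 - u ^ 2 := by nlinarith
  have hq : Real.sqrt (1 - u ^ 2) ^ 2 = 1 - u ^ 2 := Real.sq_sqrt hp.le
  have hne : Real.sqrt (1 - u ^ 2) ≠ 0 := (Real.sqrt_pos.2 hp).ne'
  simp only [Function.comp, mul_div_cancel_right₀ _ hs0, phi, psi]
  field_simp
  push_cast
  ring_nf
  rw [hq]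
  ring

lemma hasDerivAt_levelFn {a b s : ℝ} (ha : 0 ≤ a) (hab : a < b) (hb : b ≤ 1) (hs : 1 < s) :
    HasDerivAt (levelFn a b) (s * (psi (a / s) - psi (b / s))) s := by
  have h := (hasDerivAt_sq_mul_phi ha (hab.le.trans hb) hs).sub
    (hasDerivAt_sq_mul_phi (ha.trans hab.le) hb hs)
  have he : levelFn a b = (fun s => s ^ 2 * phi (a / s)) - fun s => s ^ 2 * phi (b / s) := by
    funext s; simp only [levelFn, Pi.sub_apply]; ring
  rw [he]
  exact h.congr_deriv (by ring)

lemma psi_div_lt {a b s : ℝ} (ha : 0 ≤ a) (hab : a < b) (hb : b ≤ 1) (hs : 1 < s) :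
    psi (a / s) < psi (b / s) := by
  have hs0 : 0 < s := by linarith
  have hlt : a / s < b / s := div_lt_div_of_pos_right hab hs0
  have h1 : b / s < 1 := by rw [div_lt_one hs0]; linarith
  have h0 : 0 ≤ a / s := by positivity
  exact psi_strictMonoOn ⟨h0, hlt.trans h1⟩ ⟨h0.trans hlt.le, h1⟩ hlt

/-- The endpoint `1` is included, which identifies the limit of `f` at `0⁺`; only continuity is
used there, since `φ` is differentiated on `(-1, 1)` and `b / 1` may equal `1`. -/
lemma levelFn_strictAntiOn {a b : ℝ} (ha : 0 ≤ a) (hab : a < b) (hb : b ≤ 1) :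
    StrictAntiOn (levelFn a b) (Set.Ici 1) := by
  apply strictAntiOn_of_deriv_neg (convex_Ici 1)
  · have hc : ∀ c : ℝ, ContinuousOn (fun s : ℝ => phi (c / s)) (Set.Ici 1) := fun c =>
      continuous_phi.comp_continuousOn (continuousOn_const.div continuousOn_id
        fun s hs => (zero_lt_one.trans_le hs).ne')
    exact (continuousOn_id.pow 2).mul ((hc a).sub (hc b))
  · intro s hs
    rw [interior_Ici] at hs
    have hs : 1 < s := hs
    rw [(hasDerivAt_levelFn ha hab hb hs).deriv]
    exact mul_neg_of_pos_of_neg (by linarith) (sub_neg.2 (psi_div_lt ha hab hb hs))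

/-- The reciprocal curvature `f(τ)` of the leaf through `(z, φ(|z|) - τ)`,
`|z| = r`, solves `f' = 1/(f (ψ(r_ε/f) - ψ(r/f))) > 0`, is strictly
increasing, and `f(τ) → 1` as `τ → 0⁺`. -/
theorem leaf_parameter_ODE (ε r : ℝ) (hε0 : 0 ≤ ε) (hε1 : ε < 1)
    (hr0 : 0 ≤ r) (hr1 : r < 1 - ε) (f : ℝ → ℝ)
    (hf1 : ∀ τ ∈ Set.Ioo 0 (phi r - phi (1 - ε)), 1 < f τ)
    (hfeq : ∀ τ ∈ Set.Ioo 0 (phi r - phi (1 - ε)),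
      (f τ) ^ 2 * (phi (r / f τ) - phi ((1 - ε) / f τ)) = phi r - τ - phi (1 - ε)) :
    (∀ τ ∈ Set.Ioo 0 (phi r - phi (1 - ε)),
        HasDerivAt f (1 / (f τ * (psi ((1 - ε) / f τ) - psi (r / f τ)))) τ
        ∧ 0 < 1 / (f τ * (psi ((1 - ε) / f τ) - psi (r / f τ))))
    ∧ StrictMonoOn f (Set.Ioo 0 (phi r - phi (1 - ε)))
    ∧ Filter.Tendsto f (nhdsWithin 0 (Set.Ioo 0 (phi r - phi (1 - ε)))) (nhds 1) := by
  have hb : 1 - ε ≤ 1 := by linarith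
  have hanti := levelFn_strictAntiOn hr0 hr1 hb
  have hone : levelFn r (1 - ε) 1 = phi r - phi (1 - ε) := by simp [levelFn]
  set T := phi r - phi (1 - ε) with hT
  have heq : ∀ τ ∈ Set.Ioo 0 T, levelFn r (1 - ε) (f τ) = T - τ := by
    intro τ hτ
    rw [levelFn, hfeq τ hτ]; ring
  have hlt : ∀ τ ∈ Set.Ioo 0 T, ∀ d, 1 ≤ d → (f τ < d ↔ τ < T - levelFn r (1 - ε) d) := by
    intro τ hτ d hd
    rw [← hanti.lt_iff_gt (Set.mem_Ici.2 hd) (Set.mem_Ici.2 (hf1 τ hτ).le), heq τ hτ]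
    constructor <;> intro <;> linarith
  have hgt : ∀ τ ∈ Set.Ioo 0 T, ∀ c, 1 ≤ c → (c < f τ ↔ T - levelFn r (1 - ε) c < τ) := by
    intro τ hτ c hc
    rw [← hanti.lt_iff_gt (Set.mem_Ici.2 (hf1 τ hτ).le) (Set.mem_Ici.2 hc), heq τ hτ]
    constructor <;> intro <;> linarith
  have hcont : ∀ τ ∈ Set.Ioo 0 T, ContinuousAt f τ := by
    intro τ hτ
    have hnear : ∀ᶠ t in nhds τ, t ∈ Set.Ioo 0 T := isOpen_Ioo.mem_nhds hτ
    refine tendsto_order.2 ⟨fun c hc => ?_, fun d hd => ?_⟩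
    · rcases lt_or_ge c 1 with h1 | h1
      · filter_upwards [hnear] with t ht using h1.trans (hf1 t ht)
      · filter_upwards [hnear, lt_mem_nhds ((hgt τ hτ c h1).1 hc)] with t ht h
        exact (hgt t ht c h1).2 h
    · have h1 : 1 ≤ d := ((hf1 τ hτ).trans hd).le
      filter_upwards [hnear, gt_mem_nhds ((hlt τ hτ d h1).1 hd)] with t ht h
      exact (hlt t ht d h1).2 h
  refine ⟨fun τ hτ => ?_, fun τ hτ σ hσ h => ?_, tendsto_order.2 ⟨fun c hc => ?_, fun d hd => ?_⟩⟩
  · have hf := hf1 τ hτ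
    have hpos : 0 < f τ * (psi ((1 - ε) / f τ) - psi (r / f τ)) :=
      mul_pos (by linarith) (sub_pos.2 (psi_div_lt hr0 hr1 hb hf))
    refine ⟨?_, one_div_pos.2 hpos⟩
    have hder : HasDerivAt (fun s => T - levelFn r (1 - ε) s)
        (f τ * (psi ((1 - ε) / f τ) - psi (r / f τ))) (f τ) :=
      ((hasDerivAt_levelFn hr0 hr1 hb hf).const_sub T).congr_deriv (by ring)
    rw [one_div]
    refine hder.of_local_left_inverse (hcont τ hτ) hpos.ne' ?_
    filter_upwards [isOpen_Ioo.mem_nhds hτ] with t ht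
    rw [heq t ht]; ring
  · rw [hlt τ hτ (f σ) (hf1 σ hσ).le, heq σ hσ]
    linarith
  · filter_upwards [self_mem_nhdsWithin] with t ht using hc.trans (hf1 t ht)
  · have hd0 : 0 < T - levelFn r (1 - ε) d := by
      have := hanti (Set.mem_Ici.2 le_rfl) (Set.mem_Ici.2 hd.le) hd
      linarith
    filter_upwards [self_mem_nhdsWithin, mem_nhdsWithin_of_mem_nhds (gt_mem_nhds hd0)] with t ht h
    exact (hlt t ht d hd.le).2 h
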